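/- Let n ≥ 2, let S_n = conv{e_1, …, e_n} ⊂ ℝ^n be the regular (n−1)-dimensional simplex, let z = (1/n)∑_{i=1}^n e_i be its centroid, and let L_0 be the set of lines lying in the affine hull of S_n and passing through z. Then the minimum over ℓ ∈ L_0 of the length |S_n ∩ ℓ| (1-dimensional Hausdorff measure) equals 2√2/n, and the minimum is attained if and only if ℓ is parallel to one of the edges of S_n, i.e. has direction (e_i − e_j)/√2 for some i ≠ j. -/

import Mathlib

/-!
The sections are computed explicitly. Let `ℓ` be the line `z + ℝ v` with `∑ v k = 0`, `v ≠ 0`, and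
let `M = max v k > 0`, `-m = min v k < 0`. Since the simplex is cut out of the hyperplane
`∑ x k = 1` by `x k ≥ 0`, the point `z + t v` lies in it iff `-1/(nM) ≤ t ≤ 1/(nm)`, so the section
is a segment of length `(1/M + 1/m) ‖v‖ / n` (`hausdorffMeasure_section`).

Now `‖v‖² ≥ M² + m² ≥ (M + m)² / 2` and `1/M + 1/m ≥ 4/(M + m)` give the bound `2√2/n`
(`two_sqrt_two_le`). Equality forces `M = m` and `‖v‖² = M² + m²`, so that `v` has no further
nonzero coordinate and is a multiple of some `e_i - e_j`
(`eq_of_eq_two_sqrt_two`, `eq_smul_of_norm_sq`).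
-/

open MeasureTheory Metric Set
open scoped ENNReal

/-- The convex hull of the standard basis is the standard simplex, in the `EuclideanSpace`
encoding. -/
lemma mem_simplex_iff {n : ℕ} (x : EuclideanSpace ℝ (Fin n)) :
    x ∈ convexHull ℝ (Set.range fun i : Fin n => EuclideanSpace.single i (1:ℝ)) ↔
      (∀ i, 0 ≤ x i) ∧ ∑ i, x i = 1 := by
  constructor
  · intro hx
    have hconv : Convex ℝ {x : EuclideanSpace ℝ (Fin n) | (∀ i, 0 ≤ x i) ∧ ∑ i, x i = 1} := by
      rintro a ⟨ha, ha'⟩ b ⟨hb, hb'⟩ s t hs ht hst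
      refine ⟨fun i => ?_, ?_⟩
      · have := mul_nonneg hs (ha i)
        have := mul_nonneg ht (hb i)
        simp only [PiLp.add_apply, PiLp.smul_apply, smul_eq_mul]
        linarith
      · simp only [PiLp.add_apply, PiLp.smul_apply, smul_eq_mul, Finset.sum_add_distrib,
          ← Finset.mul_sum, ha', hb']
        linarith
    refine convexHull_min ?_ hconv hx
    rintro _ ⟨i, rfl⟩
    refine ⟨fun k => ?_, ?_⟩
    · simp only [PiLp.single_apply]
      split_ifs <;> norm_num
    · simp
  · rintro ⟨h0, h1⟩
    have hx : x = ∑ i, x i • EuclideanSpace.single i (1:ℝ) := by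
      ext k
      simp [Pi.single_apply]
    rw [hx]
    exact (convex_convexHull ℝ _).sum_mem (fun i _ => h0 i) h1
      (fun i _ => subset_convexHull ℝ _ ⟨i, rfl⟩)

lemma sum_eq_one_of_mem_affineSpan {n : ℕ} {x : EuclideanSpace ℝ (Fin n)}
    (hx : x ∈ affineSpan ℝ (Set.range fun i : Fin n => EuclideanSpace.single i (1:ℝ))) :
    ∑ i, x i = 1 := by
  refine affineSpan_induction (p := fun x : EuclideanSpace ℝ (Fin n) => ∑ i, x i = 1) hx ?_ ?_
  · rintro _ ⟨i, rfl⟩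
    simp [PiLp.single_apply]
  · intro c u v w hu hv hw
    simp only [vsub_eq_sub, vadd_eq_add, PiLp.add_apply, PiLp.smul_apply, PiLp.sub_apply,
      smul_eq_mul, Finset.sum_add_distrib, ← Finset.mul_sum, Finset.sum_sub_distrib, hu, hv, hw]
    ring

/-- A nonzero vector with zero coordinate sum has a positive largest and a negative smallest
coordinate. -/
lemma exists_max_min {n : ℕ} {v : EuclideanSpace ℝ (Fin n)} (hv : v ≠ 0) (hs : ∑ i, v i = 0) :
    ∃ i j, (∀ k, v k ≤ v i) ∧ (∀ k, v j ≤ v k) ∧ 0 < v i ∧ v j < 0 := by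
  obtain ⟨a, ha⟩ : ∃ a, v a ≠ 0 := by
    by_contra! h
    exact hv (by ext k; simpa using h k)
  have : Nonempty (Fin n) := ⟨a⟩
  obtain ⟨i, hi⟩ := Finite.exists_max (fun k => v k)
  obtain ⟨j, hj⟩ := Finite.exists_min (fun k => v k)
  obtain ⟨p, -, hp⟩ := Finset.exists_pos_of_sum_zero_of_exists_nonzero (fun k => v k) hs
    ⟨a, Finset.mem_univ _, ha⟩
  obtain ⟨q, -, hq⟩ := Finset.exists_pos_of_sum_zero_of_exists_nonzero (fun k => - v k)
    (by simp [hs]) ⟨a, Finset.mem_univ _, neg_ne_zero.2 ha⟩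
  exact ⟨i, j, hi, hj, hp.trans_le (hi p), by linarith [hj q]⟩

/-- The length of the section of the simplex by the line through the centroid with direction `v`,
in terms of the largest coordinate `v i` and the smallest coordinate `v j`. -/
lemma hausdorffMeasure_section {n : ℕ} (hn : 2 ≤ n) {z v : EuclideanSpace ℝ (Fin n)}
    (hz : ∀ i, z i = 1 / (n:ℝ)) (hs : ∑ i, v i = 0)
    {ℓ : AffineSubspace ℝ (EuclideanSpace ℝ (Fin n))} (hzl : z ∈ ℓ)
    (hd : ℓ.direction = Submodule.span ℝ {v}) {i j : Fin n}
    (hi : ∀ k, v k ≤ v i) (hj : ∀ k, v j ≤ v k) (hi0 : 0 < v i) (hj0 : v j < 0) :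
    μH[1] (convexHull ℝ (Set.range fun i : Fin n => EuclideanSpace.single i (1:ℝ)) ∩ ℓ) =
      ENNReal.ofReal ((1 / v i + 1 / (-v j)) * ‖v‖ / n) := by
  have hn0 : (0:ℝ) < n := by exact_mod_cast (by omega : 0 < n)
  have hj0' : 0 < -v j := by linarith
  set a : ℝ := -(1 / (n * v i)) with ha
  set b : ℝ := 1 / (n * (-v j)) with hb
  have hab : a ≤ b := by
    have : 0 < 1 / (n * v i) := by positivity
    have : 0 < b := by positivity
    linarith
  have hset : (convexHull ℝ (Set.range fun i : Fin n => EuclideanSpace.single i (1:ℝ)) ∩ ℓ) =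
      segment ℝ (AffineMap.lineMap z (z + v) a) (AffineMap.lineMap z (z + v) b) := by
    rw [← image_segment, segment_eq_Icc hab]
    ext x
    have hmem : x ∈ (ℓ : Set _) ↔ ∃ t : ℝ, x = z + t • v := by
      rw [SetLike.mem_coe, ← AffineSubspace.vsub_right_mem_direction_iff_mem hzl, hd,
        Submodule.mem_span_singleton]
      refine exists_congr fun t => ?_
      rw [vsub_eq_sub, eq_sub_iff_add_eq, eq_comm, add_comm]
    rw [Set.mem_inter_iff, mem_simplex_iff, hmem]
    -- Each inequality is multiplied by the positive number `n`.
    have hcoord : ∀ t : ℝ, ∀ k, 0 ≤ (z + t • v) k ↔ -1 ≤ n * t * v k := fun t k => by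
      have : (z + t • v) k = (n * t * v k - (-1)) / n := by
        simp only [PiLp.add_apply, PiLp.smul_apply, smul_eq_mul, hz]
        field_simp
        ring
      rw [this, le_div_iff₀ hn0, zero_mul, sub_nonneg]
    have hat : ∀ t : ℝ, a ≤ t ↔ -1 ≤ n * t * v i := fun t => by
      rw [ha, neg_le, le_div_iff₀ (by positivity)]
      constructor <;> intro h <;> linarith
    have hbt : ∀ t : ℝ, t ≤ b ↔ -1 ≤ n * t * v j := fun t => by
      rw [hb, le_div_iff₀ (by positivity)]
      constructor <;> intro h <;> linarith
    constructor
    · rintro ⟨⟨h0, -⟩, t, rfl⟩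
      exact ⟨t, ⟨(hat t).2 ((hcoord t i).1 (h0 i)), (hbt t).2 ((hcoord t j).1 (h0 j))⟩,
        by simp [AffineMap.lineMap_apply, add_comm]⟩
    · rintro ⟨t, ⟨h1, h2⟩, rfl⟩
      have hl : AffineMap.lineMap z (z + v) t = z + t • v := by
        simp [AffineMap.lineMap_apply, add_comm]
      rw [hl]
      refine ⟨⟨fun k => (hcoord t k).2 ?_, ?_⟩, t, rfl⟩
      · rcases le_total 0 t with ht | ht
        · exact ((hbt t).1 h2).trans (mul_le_mul_of_nonneg_left (hj k) (by positivity))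
        · exact ((hat t).1 h1).trans
            (mul_le_mul_of_nonpos_left (hi k) (mul_nonpos_of_nonneg_of_nonpos hn0.le ht))
      · simp only [PiLp.add_apply, PiLp.smul_apply, smul_eq_mul, hz, Finset.sum_add_distrib,
          ← Finset.mul_sum, hs]
        simp
        field_simp
  rw [hset, hausdorffMeasure_segment, edist_dist, dist_lineMap_lineMap, dist_self_add_right,
    dist_comm, Real.dist_eq, abs_of_nonneg (sub_nonneg.2 hab)]
  congr 1
  rw [ha, hb]
  have := hi0.ne'
  have := hj0'.ne'
  have := hj0.ne
  field_simp
  ring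

lemma two_sqrt_two_le {M m N : ℝ} (hM : 0 < M) (hm : 0 < m) (hN : 0 ≤ N)
    (h : M ^ 2 + m ^ 2 ≤ N ^ 2) : 2 * √2 ≤ (1 / M + 1 / m) * N := by
  have e : (1 / M + 1 / m) * N = (M + m) * N / (M * m) := by field_simp; ring
  rw [e, le_div_iff₀ (by positivity)]
  refine le_of_sq_le_sq ?_ (by positivity)
  have h2 : √2 ^ 2 = 2 := Real.sq_sqrt (by norm_num)
  have h3 : (2 * √2 * (M * m)) ^ 2 = 8 * (M * m) ^ 2 := by linear_combination 4 * (M * m) ^ 2 * h2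
  have h4 := mul_le_mul_of_nonneg_left h (sq_nonneg (M + m))
  -- `(M+m)²(M²+m²) - 8M²m² = 6Mm(M-m)² + (M-m)⁴`
  have h5 : 0 ≤ 6 * (M * m) * (M - m) ^ 2 + ((M - m) ^ 2) ^ 2 := by positivity
  rw [h3]
  linarith

lemma eq_of_eq_two_sqrt_two {M m N : ℝ} (hM : 0 < M) (hm : 0 < m)
    (h : M ^ 2 + m ^ 2 ≤ N ^ 2) (he : (1 / M + 1 / m) * N = 2 * √2) :
    M = m ∧ N ^ 2 = M ^ 2 + m ^ 2 := by
  have e : (1 / M + 1 / m) * N = (M + m) * N / (M * m) := by field_simp; ring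
  rw [e, div_eq_iff (by positivity)] at he
  have h2 : √2 ^ 2 = 2 := Real.sq_sqrt (by norm_num)
  have h3 : (M + m) ^ 2 * N ^ 2 = 8 * (M * m) ^ 2 := by
    rw [← mul_pow, he]
    linear_combination 4 * (M * m) ^ 2 * h2
  -- A vanishing sum of nonnegative terms: the slack of `h` and the slack of `M² + m²`.
  have h4 : (M + m) ^ 2 * (N ^ 2 - (M ^ 2 + m ^ 2)) + 6 * (M * m) * (M - m) ^ 2
      + ((M - m) ^ 2) ^ 2 = 0 := by linear_combination h3
  have p1 : 0 ≤ (M + m) ^ 2 * (N ^ 2 - (M ^ 2 + m ^ 2)) :=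
    mul_nonneg (sq_nonneg _) (sub_nonneg.2 h)
  have p2 : 0 ≤ 6 * (M * m) * (M - m) ^ 2 := by positivity
  have p3 : 0 ≤ ((M - m) ^ 2) ^ 2 := by positivity
  constructor
  · have : ((M - m) ^ 2) ^ 2 = 0 := by linarith
    exact sub_eq_zero.1 (by simpa using this)
  · have : (M + m) ^ 2 * (N ^ 2 - (M ^ 2 + m ^ 2)) = 0 := by linarith
    have hne : (M + m) ^ 2 ≠ 0 := by positivity
    linarith [(mul_eq_zero.1 this).resolve_left hne]

lemma sq_add_sq_le_norm_sq {n : ℕ} (v : EuclideanSpace ℝ (Fin n)) {i j : Fin n} (hij : i ≠ j) :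
    v i ^ 2 + v j ^ 2 ≤ ‖v‖ ^ 2 := by
  rw [EuclideanSpace.real_norm_sq_eq, ← Finset.sum_pair (f := fun k => v k ^ 2) hij]
  exact Finset.sum_le_sum_of_subset_of_nonneg (Finset.subset_univ _) fun _ _ _ => sq_nonneg _

lemma eq_smul_of_norm_sq {n : ℕ} {v : EuclideanSpace ℝ (Fin n)} {i j : Fin n} (hij : i ≠ j)
    (h : ‖v‖ ^ 2 = v i ^ 2 + v j ^ 2) (hv : v i = -v j) :
    v = v i • (EuclideanSpace.single i (1:ℝ) - EuclideanSpace.single j (1:ℝ)) := by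
  ext k
  simp only [PiLp.smul_apply, PiLp.sub_apply, PiLp.single_apply, smul_eq_mul]
  by_cases hki : k = i
  · subst hki; simp [hij]
  by_cases hkj : k = j
  · subst hkj; simp [hij.symm, hv]
  have : ∑ l ∈ {k, i, j}, v l ^ 2 ≤ ‖v‖ ^ 2 := by
    rw [EuclideanSpace.real_norm_sq_eq]
    exact Finset.sum_le_sum_of_subset_of_nonneg (Finset.subset_univ _) fun _ _ _ => sq_nonneg _
  rw [Finset.sum_insert (by simp [hki, hkj]), Finset.sum_pair hij, h] at this
  have : v k ^ 2 = 0 := le_antisymm (by linarith) (sq_nonneg _)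
  simpa [hki, hkj] using this

/-- The section parallel to an edge has the minimal length. -/
lemma hausdorffMeasure_section_edge {n : ℕ} (hn : 2 ≤ n) {z : EuclideanSpace ℝ (Fin n)}
    (hz : ∀ i, z i = 1 / (n:ℝ)) {ℓ : AffineSubspace ℝ (EuclideanSpace ℝ (Fin n))} (hzl : z ∈ ℓ)
    {i j : Fin n} (hij : i ≠ j) (hd : ℓ.direction = Submodule.span ℝ
      {EuclideanSpace.single i (1:ℝ) - EuclideanSpace.single j (1:ℝ)}) :
    μH[1] (convexHull ℝ (Set.range fun i : Fin n => EuclideanSpace.single i (1:ℝ)) ∩ ℓ) =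
      ENNReal.ofReal (2 * √2 / n) := by
  set v : EuclideanSpace ℝ (Fin n) :=
    EuclideanSpace.single i (1:ℝ) - EuclideanSpace.single j (1:ℝ) with hv
  have hvk : ∀ k, v k = (if k = i then 1 else 0) - (if k = j then 1 else 0) := fun k => by
    simp only [hv, PiLp.sub_apply, PiLp.single_apply]
  have hi1 : v i = 1 := by simp [hvk, hij]
  have hj1 : v j = -1 := by simp [hvk, hij.symm]
  have hnorm : ‖v‖ = √2 := by
    rw [eq_comm, Real.sqrt_eq_iff_mul_self_eq (by norm_num) (norm_nonneg _), ← sq, hv,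
      norm_sub_sq_real]
    simp [EuclideanSpace.inner_single_left, hij]
    norm_num
  rw [hausdorffMeasure_section (i := i) (j := j) hn hz ?_ hzl hd ?_ ?_ ?_ ?_, hi1, hj1, hnorm]
  · norm_num
  · simp [hvk, Finset.sum_sub_distrib]
  · intro k; rw [hi1, hvk]; split_ifs <;> norm_num
  · intro k; rw [hj1, hvk]; split_ifs <;> norm_num
  · rw [hi1]; norm_num
  · rw [hj1]; norm_num

/-- Every section through the centroid has length `(1/M + 1/m) ‖v‖ / n`, where `M = v i` and
`-m = v j` are the extreme coordinates of a direction vector `v`. -/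
lemma exists_direction {n : ℕ} (hn : 2 ≤ n) {z : EuclideanSpace ℝ (Fin n)}
    (hz : ∀ i, z i = 1 / (n:ℝ)) {ℓ : AffineSubspace ℝ (EuclideanSpace ℝ (Fin n))}
    (hf : Module.finrank ℝ ℓ.direction = 1)
    (hl : ℓ ≤ affineSpan ℝ (Set.range fun i : Fin n => EuclideanSpace.single i (1:ℝ)))
    (hzl : z ∈ ℓ) :
    ∃ (v : EuclideanSpace ℝ (Fin n)) (i j : Fin n), i ≠ j ∧ 0 < v i ∧ 0 < -v j ∧
      ℓ.direction = Submodule.span ℝ {v} ∧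
      μH[1] (convexHull ℝ (Set.range fun i : Fin n => EuclideanSpace.single i (1:ℝ)) ∩ ℓ) =
        ENNReal.ofReal ((1 / v i + 1 / (-v j)) * ‖v‖ / n) := by
  obtain ⟨⟨v, hvl⟩, hv0, hspan⟩ := finrank_eq_one_iff'.1 hf
  have hd : ℓ.direction = Submodule.span ℝ {v} := by
    refine le_antisymm (fun w hw => ?_) ((Submodule.span_singleton_le_iff_mem _ _).2 hvl)
    obtain ⟨c, hc⟩ := hspan ⟨w, hw⟩
    exact Submodule.mem_span_singleton.2 ⟨c, congrArg Subtype.val hc⟩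
  have hs : ∑ i, v i = 0 := by
    have h1 := sum_eq_one_of_mem_affineSpan (hl (AffineSubspace.vadd_mem_of_mem_direction hvl hzl))
    have h2 := sum_eq_one_of_mem_affineSpan (hl hzl)
    simp only [vadd_eq_add, PiLp.add_apply, Finset.sum_add_distrib] at h1
    linarith
  obtain ⟨i, j, hi, hj, hi0, hj0⟩ := exists_max_min (fun h => hv0 (Subtype.ext h)) hs
  refine ⟨v, i, j, ?_, hi0, by linarith, hd,
    hausdorffMeasure_section hn hz hs hzl hd hi hj hi0 hj0⟩
  rintro rfl
  linarith

theorem stmt18 (n : ℕ) (hn : 2 ≤ n)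
    (S : Set (EuclideanSpace ℝ (Fin n)))
    (hS : S = convexHull ℝ (Set.range fun i : Fin n => EuclideanSpace.single i (1:ℝ)))
    (z : EuclideanSpace ℝ (Fin n)) (hz : ∀ i, z i = 1 / (n:ℝ)) :
    IsLeast
      { L : ℝ≥0∞ | ∃ ℓ : AffineSubspace ℝ (EuclideanSpace ℝ (Fin n)),
          Module.finrank ℝ ℓ.direction = 1 ∧
          ℓ ≤ affineSpan ℝ (Set.range fun i : Fin n => EuclideanSpace.single i (1:ℝ)) ∧
          z ∈ ℓ ∧ L = μH[1] (S ∩ ℓ) }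
      (ENNReal.ofReal (2 * Real.sqrt 2 / n)) ∧
    ∀ ℓ : AffineSubspace ℝ (EuclideanSpace ℝ (Fin n)),
      Module.finrank ℝ ℓ.direction = 1 →
      ℓ ≤ affineSpan ℝ (Set.range fun i : Fin n => EuclideanSpace.single i (1:ℝ)) →
      z ∈ ℓ →
      (μH[1] (S ∩ ℓ) = ENNReal.ofReal (2 * Real.sqrt 2 / n) ↔
        ∃ i j : Fin n, i ≠ j ∧
          ℓ.direction = Submodule.span ℝ
            {EuclideanSpace.single i (1:ℝ) - EuclideanSpace.single j (1:ℝ)}) := by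
  subst hS
  have hn0 : (0:ℝ) < n := by exact_mod_cast (by omega : 0 < n)
  refine ⟨⟨?_, ?_⟩, ?_⟩
  · obtain ⟨i, j, hij⟩ : ∃ i j : Fin n, i ≠ j :=
      ⟨⟨0, by omega⟩, ⟨1, by omega⟩, by simp⟩
    set v : EuclideanSpace ℝ (Fin n) :=
      EuclideanSpace.single i (1:ℝ) - EuclideanSpace.single j (1:ℝ) with hv
    have hv0 : v ≠ 0 := fun h => by
      have := congrArg (fun w : EuclideanSpace ℝ (Fin n) => w i) h
      simp [hv, hij] at this
    have hzs : z ∈ affineSpan ℝ (Set.range fun i : Fin n => EuclideanSpace.single i (1:ℝ)) := by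
      refine convexHull_subset_affineSpan _ ((mem_simplex_iff z).2 ⟨fun i => ?_, ?_⟩)
      · rw [hz]; positivity
      · simp [hz, hn0.ne']
    have hvs : v ∈
        (affineSpan ℝ (Set.range fun i : Fin n => EuclideanSpace.single i (1:ℝ))).direction :=
      AffineSubspace.vsub_mem_direction (subset_affineSpan ℝ _ ⟨i, rfl⟩)
        (subset_affineSpan ℝ _ ⟨j, rfl⟩)
    refine ⟨AffineSubspace.mk' z (Submodule.span ℝ {v}), ?_, ?_, AffineSubspace.self_mem_mk' _ _,
      (hausdorffMeasure_section_edge hn hz (AffineSubspace.self_mem_mk' _ _) hij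
        (AffineSubspace.direction_mk' _ _)).symm⟩
    · rw [AffineSubspace.direction_mk', finrank_span_singleton hv0]
    · intro p hp
      rw [AffineSubspace.mem_mk'] at hp
      exact (AffineSubspace.vsub_right_mem_direction_iff_mem hzs p).1
        ((Submodule.span_singleton_le_iff_mem _ _).2 hvs hp)
  · rintro _ ⟨ℓ, hf, hl, hzl, rfl⟩
    obtain ⟨v, i, j, hij, hi, hj, -, h⟩ := exists_direction hn hz hf hl hzl
    rw [h]
    refine ENNReal.ofReal_le_ofReal (div_le_div_of_nonneg_right ?_ hn0.le)
    exact two_sqrt_two_le hi hj (norm_nonneg _) (by simpa using sq_add_sq_le_norm_sq v hij)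
  · intro ℓ hf hl hzl
    refine ⟨fun hL => ?_, fun ⟨i, j, hij, hd⟩ => hausdorffMeasure_section_edge hn hz hzl hij hd⟩
    obtain ⟨v, i, j, hij, hi, hj, hd, h⟩ := exists_direction hn hz hf hl hzl
    rw [h, ENNReal.ofReal_eq_ofReal_iff (by positivity) (by positivity),
      div_left_inj' hn0.ne'] at hL
    obtain ⟨h1, h2⟩ :=
      eq_of_eq_two_sqrt_two hi hj (by simpa using sq_add_sq_le_norm_sq v hij) hL
    refine ⟨i, j, hij, ?_⟩
    rw [hd, eq_smul_of_norm_sq hij (by simpa using h2) h1,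
      Submodule.span_singleton_smul_eq hi.ne'.isUnit]
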